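/- Let G be a finitely generated group acting by isometries on an ℝ-tree Γ. Suppose the action is minimal and irreducible, and the translation length of every element of G is an integer. Then Γ is a simplicial tree. -/

import Mathlib

open Set Filter Metric

section Common

variable {H : Type*} [MetricSpace H]

/-- `γ` parametrizes a geodesic from `a` to `b` by arclength on `[0, dist a b]`. -/
def IsGeodesicSegment (γ : ℝ → H) (a b : H) : Prop :=
  γ 0 = a ∧ γ (dist a b) = b ∧
    ∀ s ∈ Set.Icc (0:ℝ) (dist a b), ∀ t ∈ Set.Icc (0:ℝ) (dist a b),
      dist (γ s) (γ t) = |s - t|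

/-- A geodesic space: every pair of points is joined by a geodesic. -/
def GeodesicSpace (H : Type*) [MetricSpace H] : Prop :=
  ∀ a b : H, ∃ γ : ℝ → H, IsGeodesicSegment γ a b

/-- The image of a geodesic segment from `a` to `b`. -/
def segImage (γ : ℝ → H) (a b : H) : Set H :=
  γ '' Set.Icc 0 (dist a b)

/-- A space has `Δ`-thin triangles if each side of every geodesic triangle is contained
in the `Δ`-neighborhood of the union of the other two sides. -/
def ThinTriangles (H : Type*) [MetricSpace H] (Δ : ℝ) : Prop :=
  ∀ a b c : H, ∀ γab γbc γca : ℝ → H,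
    IsGeodesicSegment γab a b → IsGeodesicSegment γbc b c → IsGeodesicSegment γca c a →
      ∀ x ∈ segImage γab a b, ∃ y ∈ segImage γbc b c ∪ segImage γca c a, dist x y ≤ Δ

/-- An arc from `a` to `b`, parametrized (injectively and continuously) by `[0,1]`. -/
def IsArcParam (α : ℝ → H) (a b : H) : Prop :=
  ContinuousOn α (Set.Icc 0 1) ∧ Set.InjOn α (Set.Icc 0 1) ∧ α 0 = a ∧ α 1 = b

/-- An `ℝ`-tree: a metric space in which every pair of points is joined by a geodesic
(so it is a path-metric space and arcs are isometric to intervals of `ℝ`) and in which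
the arc joining two points is unique. -/
def IsRTree (X : Type*) [MetricSpace X] : Prop :=
  (∀ a b : X, ∃ γ : ℝ → X, IsGeodesicSegment γ a b) ∧
  ∀ a b : X, ∀ α β : ℝ → X, IsArcParam α a b → IsArcParam β a b →
    α '' Set.Icc 0 1 = β '' Set.Icc 0 1

/-- The translation length of an isometry. -/
noncomputable def translationLength {X : Type*} [MetricSpace X] (τ : X ≃ᵢ X) : ℝ :=
  ⨅ x : X, dist x (τ x)

/-- The core of an isometry of an `ℝ`-tree: points moved the minimal distance. -/
def isomCore {X : Type*} [MetricSpace X] (τ : X ≃ᵢ X) : Set X :=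
  {x : X | dist x (τ x) = translationLength τ}

/-- An elliptic isometry: one having a fixed point. -/
def IsElliptic {X : Type*} [MetricSpace X] (τ : X ≃ᵢ X) : Prop :=
  ∃ x, τ x = x

/-- A hyperbolic isometry of an `ℝ`-tree: positive translation length, with core
isometric to the real line (its axis). -/
def IsHyperbolicIsom {X : Type*} [MetricSpace X] (τ : X ≃ᵢ X) : Prop :=
  0 < translationLength τ ∧
    ∃ e : ℝ → X, (∀ s t : ℝ, dist (e s) (e t) = |s - t|) ∧ Set.range e = isomCore τ

/-- A metric simplicial tree: an `ℝ`-tree together with a closed discrete set `V` of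
vertices such that each connected component of the complement of `V` is an open edge:
it is the interior of a geodesic segment of positive length with endpoints in `V`. -/
def IsMetricSimplicialTree (X : Type*) [MetricSpace X] : Prop :=
  IsRTree X ∧
    ∃ V : Set X, IsClosed V ∧
      (∀ v ∈ V, ∃ ε > 0, ∀ w ∈ V, dist v w < ε → w = v) ∧
      ∀ x ∈ Vᶜ, ∃ L > (0:ℝ), ∃ f : ℝ → X,
        (∀ s ∈ Set.Icc (0:ℝ) L, ∀ t ∈ Set.Icc (0:ℝ) L, dist (f s) (f t) = |s - t|) ∧
        f '' Set.Ioo 0 L = connectedComponentIn Vᶜ x ∧ f 0 ∈ V ∧ f L ∈ V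

end Common

/-!
A point `p` on the arc `[x, z]` lies on `[x, y]` or on `[y, z]`; so being in the same component of
`X \ {p}` is transitive, and arcs overlapping in a nondegenerate arc fit together into an arc.

Let `p ≠ q` be branch points. Some direction pair at `p` avoids `q`, and a ping-pong argument
provides a hyperbolic `f` whose axis enters and leaves `p` in these two directions, so that `p` is
the projection of `q` onto it. Choosing `g` likewise at `q`, the axes are disjoint with bridge
`[p, q]`, and `f * g` has translation length `t(f) + t(g) + 2 d(p, q)`. If translation lengths
lie in a discrete subgroup of `ℝ`, then so does `2 d(p, q)`, and branch points are uniformly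
separated. By minimality every point lies on an arc between two translates of a branch point; the
points of such an arc between consecutive branch points form an edge.
-/

section MetricInterval

variable {X : Type*} [PseudoMetricSpace X] {a b m x y : X}

/-- The metric interval `[a, b]`: the points at which the triangle inequality for `a` and `b` is an
equality. In an `ℝ`-tree this is the arc from `a` to `b`, and `p ∉ metricInterval x y` expresses
that `x` and `y` lie in the same component of the complement of `p`. -/
def metricInterval (a b : X) : Set X := {x | dist a x + dist x b = dist a b}

lemma mem_metricInterval : x ∈ metricInterval a b ↔ dist a x + dist x b = dist a b := Iff.rfl

@[simp] lemma left_mem_metricInterval (a b : X) : a ∈ metricInterval a b := by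
  simp [mem_metricInterval]

@[simp] lemma right_mem_metricInterval (a b : X) : b ∈ metricInterval a b := by
  simp [mem_metricInterval]

lemma metricInterval_comm (a b : X) : metricInterval a b = metricInterval b a := by
  ext x
  simp only [mem_metricInterval, dist_comm, add_comm]

lemma metricInterval_subset_left (hm : m ∈ metricInterval a b) :
    metricInterval a m ⊆ metricInterval a b := by
  intro x hx
  rw [mem_metricInterval] at *
  linarith [dist_triangle a x b, dist_triangle x m b]

lemma metricInterval_subset_right (hm : m ∈ metricInterval a b) :
    metricInterval m b ⊆ metricInterval a b := by
  rw [metricInterval_comm m, metricInterval_comm a] at *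
  exact metricInterval_subset_left hm

lemma mem_metricInterval_of_mem_left (hm : m ∈ metricInterval a b) (hx : x ∈ metricInterval a m) :
    m ∈ metricInterval x b := by
  rw [mem_metricInterval] at *
  linarith [dist_triangle a x b, dist_triangle x m b]

lemma notMem_metricInterval_of_dist_lt (h : dist a b < dist m b) : m ∉ metricInterval a b := by
  intro hm
  rw [mem_metricInterval] at hm
  linarith [dist_nonneg (x := a) (y := m)]

lemma apply_mem_metricInterval_iff {Y : Type*} [PseudoMetricSpace Y] {f : X → Y}
    (hf : Isometry f) : f x ∈ metricInterval (f a) (f b) ↔ x ∈ metricInterval a b := by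
  simp only [mem_metricInterval, hf.dist_eq]

lemma mem_metricInterval_inv_apply_iff (f : X ≃ᵢ X) :
    x ∈ metricInterval (f⁻¹ a) b ↔ f x ∈ metricInterval a (f b) := by
  rw [← apply_mem_metricInterval_iff f.isometry, IsometryEquiv.apply_inv_self]

end MetricInterval

section MetricInterval

variable {X : Type*} [MetricSpace X] {a b m x y z : X}

lemma metricInterval_inter_subset (hm : m ∈ metricInterval a b) :
    metricInterval a m ∩ metricInterval m b ⊆ {m} := by
  rintro x ⟨hx, hx'⟩
  rw [mem_metricInterval, dist_comm m x] at *
  exact dist_le_zero.1 (by linarith [dist_triangle a x b])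

lemma eq_of_mem_metricInterval_of_mem_metricInterval (hy : y ∈ metricInterval x z)
    (hz : z ∈ metricInterval x y) : y = z := by
  rw [mem_metricInterval, dist_comm z y] at *
  exact dist_le_zero.1 (by linarith)

end MetricInterval

section ConcatPath

/-- The concatenation of a path `f` on `[0, A]` with a path `g` on `[0, B]`, as a path
on `[0, A + B]`. It is meant for `f A = g 0`. -/
noncomputable def concatPath {X : Type*} (A : ℝ) (f g : ℝ → X) : ℝ → X :=
  (Iic A).piecewise f (fun t ↦ g (t - A))

variable {X : Type*} {f g : ℝ → X} {A B t : ℝ}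

lemma concatPath_of_le (f g : ℝ → X) (ht : t ≤ A) : concatPath A f g t = f t :=
  piecewise_eq_of_mem _ _ _ ht

lemma concatPath_of_lt (f g : ℝ → X) (ht : A < t) : concatPath A f g t = g (t - A) :=
  piecewise_eq_of_notMem _ _ _ ht.not_ge

lemma concatPath_of_ge (hfg : f A = g 0) (ht : A ≤ t) : concatPath A f g t = g (t - A) := by
  rcases ht.eq_or_lt with rfl | ht
  · rw [concatPath_of_le f g le_rfl, sub_self, hfg]
  · exact concatPath_of_lt f g ht

lemma continuousOn_concatPath [TopologicalSpace X] (hA : 0 ≤ A) (hB : 0 ≤ B) (hfg : f A = g 0)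
    (hf : ContinuousOn f (Icc 0 A)) (hg : ContinuousOn g (Icc 0 B)) :
    ContinuousOn (concatPath A f g) (Icc 0 (A + B)) := by
  rw [← Icc_union_Icc_eq_Icc hA (le_add_of_nonneg_right hB)]
  refine ContinuousOn.union_of_isClosed ?_ ?_ isClosed_Icc isClosed_Icc
  · exact hf.congr fun t ht ↦ concatPath_of_le f g ht.2
  · refine ContinuousOn.congr (hg.comp (by fun_prop) fun t ht ↦ ?_)
      fun t ht ↦ concatPath_of_ge hfg ht.1
    exact ⟨sub_nonneg.2 ht.1, sub_le_iff_le_add'.2 ht.2⟩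

lemma injOn_concatPath (hf : InjOn f (Icc 0 A)) (hg : InjOn g (Icc 0 B))
    (hmeet : ∀ s ∈ Icc 0 A, ∀ t ∈ Icc 0 B, f s = g t → t = 0) :
    InjOn (concatPath A f g) (Icc 0 (A + B)) := by
  have hcross : ∀ s ∈ Icc 0 A, ∀ t ∈ Ioc A (A + B), f s ≠ g (t - A) := fun s hs t ht hst ↦ by
    linarith [ht.1, hmeet s hs (t - A) ⟨by linarith [ht.1], by linarith [ht.2]⟩ hst]
  intro s hs t ht hst
  rcases le_or_gt s A with hsA | hsA <;> rcases le_or_gt t A with htA | htA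
  · rw [concatPath_of_le f g hsA, concatPath_of_le f g htA] at hst
    exact hf ⟨hs.1, hsA⟩ ⟨ht.1, htA⟩ hst
  · rw [concatPath_of_le f g hsA, concatPath_of_lt f g htA] at hst
    exact absurd hst (hcross s ⟨hs.1, hsA⟩ t ⟨htA, ht.2⟩)
  · rw [concatPath_of_lt f g hsA, concatPath_of_le f g htA] at hst
    exact absurd hst.symm (hcross t ⟨ht.1, htA⟩ s ⟨hsA, hs.2⟩)
  · rw [concatPath_of_lt f g hsA, concatPath_of_lt f g htA] at hst
    exact sub_left_injective (hg ⟨by linarith, by linarith [hs.2]⟩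
      ⟨by linarith, by linarith [ht.2]⟩ hst)

end ConcatPath

section Arcs

variable {X : Type*} [MetricSpace X] {a b m x y z p : X}

namespace IsGeodesicSegment

variable {γ : ℝ → X} {s : ℝ}

lemma injOn (h : IsGeodesicSegment γ a b) : InjOn γ (Icc 0 (dist a b)) := by
  intro s hs t ht hst
  have := h.2.2 s hs t ht
  rw [hst, dist_self] at this
  exact sub_eq_zero.1 (abs_eq_zero.1 this.symm)

lemma continuousOn (h : IsGeodesicSegment γ a b) : ContinuousOn γ (Icc 0 (dist a b)) := by
  refine (LipschitzOnWith.of_dist_le_mul (K := 1) fun s hs t ht ↦ ?_).continuousOn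
  rw [h.2.2 s hs t ht, NNReal.coe_one, one_mul, Real.dist_eq]

lemma dist_left (h : IsGeodesicSegment γ a b) (hs : s ∈ Icc 0 (dist a b)) :
    dist a (γ s) = s := by
  have := h.2.2 0 ⟨le_rfl, dist_nonneg⟩ s hs
  rwa [h.1, zero_sub, abs_neg, abs_of_nonneg hs.1] at this

lemma dist_right (h : IsGeodesicSegment γ a b) (hs : s ∈ Icc 0 (dist a b)) :
    dist (γ s) b = dist a b - s := by
  have := h.2.2 s hs (dist a b) ⟨dist_nonneg, le_rfl⟩
  rwa [h.2.1, abs_sub_comm, abs_of_nonneg (sub_nonneg.2 hs.2)] at this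

lemma segImage_subset (h : IsGeodesicSegment γ a b) : segImage γ a b ⊆ metricInterval a b := by
  rintro _ ⟨s, hs, rfl⟩
  rw [mem_metricInterval, h.dist_left hs, h.dist_right hs, add_sub_cancel]

lemma image_Ioo (h : IsGeodesicSegment γ a b) :
    γ '' Ioo 0 (dist a b) = segImage γ a b \ {a, b} := by
  have hends : ({a, b} : Set X) = γ '' {0, dist a b} := by rw [image_pair, h.1, h.2.1]
  rw [← Icc_sdiff_both, h.injOn.image_sdiff_subset (pair_subset_iff.2
    ⟨⟨le_rfl, dist_nonneg⟩, dist_nonneg, le_rfl⟩), segImage, hends]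

end IsGeodesicSegment

lemma isArcParam_rescale {f : ℝ → X} {L : ℝ} (hL : 0 < L) (hcont : ContinuousOn f (Icc 0 L))
    (hinj : InjOn f (Icc 0 L)) : IsArcParam (fun t ↦ f (t * L)) (f 0) (f L) := by
  have hmaps : MapsTo (· * L) (Icc 0 1) (Icc 0 L) := fun t ht ↦
    ⟨mul_nonneg ht.1 hL.le, mul_le_of_le_one_left hL.le ht.2⟩
  exact ⟨hcont.comp (by fun_prop) hmaps,
    hinj.comp (mul_left_injective₀ hL.ne').injOn hmaps, by simp, by simp⟩

lemma IsRTree.image_Icc_eq_image_Icc (hX : IsRTree X) {f g : ℝ → X} {L M : ℝ} (hL : 0 < L)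
    (hM : 0 < M) (hf : ContinuousOn f (Icc 0 L)) (hf' : InjOn f (Icc 0 L))
    (hg : ContinuousOn g (Icc 0 M)) (hg' : InjOn g (Icc 0 M)) (h0 : f 0 = g 0) (h1 : f L = g M) :
    f '' Icc 0 L = g '' Icc 0 M := by
  have rescale : ∀ {K : ℝ} (k : ℝ → X), 0 < K →
      (fun t ↦ k (t * K)) '' Icc 0 1 = k '' Icc 0 K := by
    intro K k hK
    rw [← image_image k, image_mul_right_Icc zero_le_one hK.le, zero_mul, one_mul]
  have hg_arc := isArcParam_rescale hM hg hg'
  rw [← h0, ← h1] at hg_arc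
  rw [← rescale f hL, ← rescale g hM]
  exact hX.2 _ _ _ _ (isArcParam_rescale hL hf hf') hg_arc

namespace IsRTree

variable {γ : ℝ → X}

lemma mem_segImage_of_inter_subset (hX : IsRTree X) (h : IsGeodesicSegment γ a b)
    (hm : metricInterval a m ∩ metricInterval m b ⊆ {m}) : m ∈ segImage γ a b := by
  rcases eq_or_ne a b with rfl | hab
  · have ham : a = m := hm ⟨left_mem_metricInterval a m, right_mem_metricInterval m a⟩
    exact ⟨0, ⟨le_rfl, dist_nonneg⟩, h.1.trans ham⟩
  obtain ⟨γ₁, h₁⟩ := hX.1 a m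
  obtain ⟨γ₂, h₂⟩ := hX.1 m b
  have hab_pos : 0 < dist a b := dist_pos.2 hab
  have hmeet : ∀ s ∈ Icc 0 (dist a m), ∀ t ∈ Icc 0 (dist m b), γ₁ s = γ₂ t → t = 0 := by
    intro s hs t ht hst
    have : γ₂ t = m := hm ⟨hst ▸ h₁.segImage_subset ⟨s, hs, rfl⟩, h₂.segImage_subset ⟨t, ht, rfl⟩⟩
    rw [← h₂.dist_left ht, this, dist_self]
  have hjoin : γ₁ (dist a m) = γ₂ 0 := h₁.2.1.trans h₂.1.symm
  have himage := hX.image_Icc_eq_image_Icc (hab_pos.trans_le (dist_triangle a m b)) hab_pos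
    (continuousOn_concatPath dist_nonneg dist_nonneg hjoin h₁.continuousOn h₂.continuousOn)
    (injOn_concatPath h₁.injOn h₂.injOn hmeet) h.continuousOn h.injOn
    (by rw [concatPath_of_le _ _ dist_nonneg, h₁.1, h.1])
    (by rw [concatPath_of_ge hjoin (le_add_of_nonneg_right dist_nonneg), add_sub_cancel_left,
      h₂.2.1, h.2.1])
  rw [segImage, ← himage]
  exact ⟨dist a m, ⟨dist_nonneg, le_add_of_nonneg_right dist_nonneg⟩,
    (concatPath_of_le _ _ le_rfl).trans h₁.2.1⟩

lemma segImage_eq_metricInterval (hX : IsRTree X) (h : IsGeodesicSegment γ a b) :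
    segImage γ a b = metricInterval a b :=
  h.segImage_subset.antisymm fun _ hm ↦
    hX.mem_segImage_of_inter_subset h (metricInterval_inter_subset hm)

lemma mem_metricInterval_of_inter_subset (hX : IsRTree X)
    (hm : metricInterval a m ∩ metricInterval m b ⊆ {m}) : m ∈ metricInterval a b := by
  obtain ⟨γ, h⟩ := hX.1 a b
  exact h.segImage_subset (hX.mem_segImage_of_inter_subset h hm)

lemma isPreconnected_metricInterval (hX : IsRTree X) (a b : X) :
    IsPreconnected (metricInterval a b) := by
  obtain ⟨γ, h⟩ := hX.1 a b
  exact hX.segImage_eq_metricInterval h ▸ isPreconnected_Icc.image γ h.continuousOn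

lemma isCompact_metricInterval (hX : IsRTree X) (a b : X) : IsCompact (metricInterval a b) := by
  obtain ⟨γ, h⟩ := hX.1 a b
  exact hX.segImage_eq_metricInterval h ▸ isCompact_Icc.image_of_continuousOn h.continuousOn

lemma mem_or_mem_of_mem_metricInterval (hX : IsRTree X) (hx : x ∈ metricInterval a b)
    (hy : y ∈ metricInterval a b) : x ∈ metricInterval a y ∨ x ∈ metricInterval y b := by
  obtain ⟨γ, h⟩ := hX.1 a b
  rw [← hX.segImage_eq_metricInterval h] at hx hy
  obtain ⟨s, hs, rfl⟩ := hx
  obtain ⟨t, ht, rfl⟩ := hy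
  have hst := h.2.2 s hs t ht
  rw [mem_metricInterval, mem_metricInterval, dist_comm (γ t) (γ s), h.dist_left hs,
    h.dist_left ht, h.dist_right hs, h.dist_right ht, hst]
  rcases le_total s t with hle | hle
  · exact .inl (by rw [abs_of_nonpos (by linarith)]; ring)
  · exact .inr (by rw [abs_of_nonneg (by linarith)]; ring)

lemma exists_median (hX : IsRTree X) (a b c : X) :
    ∃ m, m ∈ metricInterval a b ∧ m ∈ metricInterval b c ∧ m ∈ metricInterval a c := by
  obtain ⟨m, hm, hmin⟩ := (hX.isCompact_metricInterval b c).exists_isMinOn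
    ⟨b, left_mem_metricInterval b c⟩ (f := fun x ↦ dist a x) (by fun_prop)
  have hend : ∀ d, metricInterval m d ⊆ metricInterval b c → m ∈ metricInterval a d := by
    refine fun d hd ↦ hX.mem_metricInterval_of_inter_subset ?_
    rintro x ⟨hax, hxd⟩
    have hmx : dist a m ≤ dist a x := hmin (hd hxd)
    rw [mem_metricInterval] at hax
    exact dist_le_zero.1 (by linarith)
  refine ⟨m, hend b ?_, hm, hend c (metricInterval_subset_right hm)⟩
  rw [metricInterval_comm m b]
  exact metricInterval_subset_left hm

lemma metricInterval_subset_union (hX : IsRTree X) (x y z : X) :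
    metricInterval x z ⊆ metricInterval x y ∪ metricInterval y z := by
  intro p hp
  obtain ⟨m, hxy, hyz, hxz⟩ := hX.exists_median x y z
  exact (hX.mem_or_mem_of_mem_metricInterval hp hxz).imp
    (fun h ↦ metricInterval_subset_left hxy h) (fun h ↦ metricInterval_subset_right hyz h)

lemma mem_of_mem_of_notMem (hX : IsRTree X) (hxz : p ∈ metricInterval x z)
    (hxy : p ∉ metricInterval x y) : p ∈ metricInterval y z :=
  (hX.metricInterval_subset_union x y z hxz).resolve_left hxy

lemma notMem_trans (hX : IsRTree X) (hxy : p ∉ metricInterval x y)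
    (hyz : p ∉ metricInterval y z) : p ∉ metricInterval x z :=
  fun hxz ↦ hyz (hX.mem_of_mem_of_notMem hxz hxy)

lemma mem_metricInterval_of_overlap (hX : IsRTree X) {w : X} (hyz : y ≠ z)
    (hy : y ∈ metricInterval x z) (hz : z ∈ metricInterval y w) :
    y ∈ metricInterval x w ∧ z ∈ metricInterval x w := by
  have hzw : z ∈ metricInterval x w := hX.mem_of_mem_of_notMem hz fun hzx ↦
    hyz (eq_of_mem_metricInterval_of_mem_metricInterval hy (metricInterval_comm y x ▸ hzx))
  exact ⟨metricInterval_subset_left hzw hy, hzw⟩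

end IsRTree

end Arcs

section Isometries

variable {X : Type*} [MetricSpace X] {f g : X ≃ᵢ X} {p q v x y : X}

lemma translationLength_le (f : X ≃ᵢ X) (x : X) : translationLength f ≤ dist x (f x) :=
  ciInf_le ⟨0, forall_mem_range.2 fun _ ↦ dist_nonneg⟩ x

lemma dist_inv_apply (f : X ≃ᵢ X) (x : X) : dist x (f⁻¹ x) = dist x (f x) := by
  rw [← f.isometry.dist_eq, f.apply_inv_self, dist_comm]

lemma isomCore_inv (f : X ≃ᵢ X) : isomCore f⁻¹ = isomCore f := by
  simp only [isomCore, translationLength, dist_inv_apply]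

lemma translationLength_conj (h f : X ≃ᵢ X) :
    translationLength (h * f * h⁻¹) = translationLength f := by
  refine (h.toEquiv.iInf_congr fun x ↦ ?_).symm
  simp [IsometryEquiv.mul_apply, h.isometry.dist_eq]

lemma mem_isomCore_conj_iff (h f : X ≃ᵢ X) :
    x ∈ isomCore (h * f * h⁻¹) ↔ h⁻¹ x ∈ isomCore f := by
  simp only [isomCore, mem_ofPred_eq, translationLength_conj]
  rw [← h.isometry.dist_eq (h⁻¹ x), h.apply_inv_self, IsometryEquiv.mul_apply,
    IsometryEquiv.mul_apply]

lemma notMem_metricInterval_apply_of_mem_isomCore (hp : p ∉ isomCore f) (hx : x ∈ isomCore f) :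
    p ∉ metricInterval (f p) x := by
  intro hpx
  have hlt : dist x (f x) < dist p (f p) := by
    rw [show dist x (f x) = translationLength f from hx]
    exact lt_of_le_of_ne (translationLength_le f p) (Ne.symm hp)
  rw [mem_metricInterval, dist_comm (f p) p] at hpx
  linarith [dist_triangle (f p) (f x) x, f.isometry.dist_eq p x, dist_comm x (f x)]

lemma dist_pow_apply_le (f : X ≃ᵢ X) (x : X) (n : ℕ) :
    dist x ((f ^ n) x) ≤ n * dist x (f x) := by
  refine (dist_le_range_sum_dist (fun i ↦ (f ^ i) x) n).trans_eq ?_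
  simp [pow_succ, IsometryEquiv.mul_apply, (f ^ _).isometry.dist_eq]

/-- `p` lies on the axis of the hyperbolic isometry `f`: it is an interior point of the arc from
`f⁻¹ p` to `f p`. -/
structure IsAxisPoint (f : X ≃ᵢ X) (p : X) : Prop where
  apply_ne : f p ≠ p
  mem : p ∈ metricInterval (f⁻¹ p) (f p)

namespace IsAxisPoint

lemma of_apply_mem (hne : f p ≠ p) (hmem : f p ∈ metricInterval p (f (f p))) :
    IsAxisPoint f p :=
  ⟨hne, (mem_metricInterval_inv_apply_iff f).2 hmem⟩

lemma pow_apply_mem (hX : IsRTree X) (hp : IsAxisPoint f p) (n : ℕ) :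
    (f ^ n) p ∈ metricInterval p ((f ^ (n + 1)) p) := by
  induction n with
  | zero => simp
  | succ n ih =>
    have hne : (f ^ n) p ≠ (f ^ (n + 1)) p := by
      rw [pow_succ, IsometryEquiv.mul_apply]
      exact (f ^ n).injective.ne hp.apply_ne.symm
    refine (hX.mem_metricInterval_of_overlap hne ih ?_).2
    simp only [pow_succ, IsometryEquiv.mul_apply]
    rw [apply_mem_metricInterval_iff (f ^ n).isometry, ← mem_metricInterval_inv_apply_iff]
    exact hp.mem

lemma dist_pow_apply (hX : IsRTree X) (hp : IsAxisPoint f p) (n : ℕ) :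
    dist p ((f ^ n) p) = n * dist p (f p) := by
  induction n with
  | zero => simp
  | succ n ih =>
    have hlast : dist ((f ^ n) p) ((f ^ (n + 1)) p) = dist p (f p) := by
      rw [pow_succ, IsometryEquiv.mul_apply, (f ^ n).isometry.dist_eq]
    rw [← mem_metricInterval.1 (hp.pow_apply_mem hX n), ih, hlast]
    push_cast
    ring

lemma translationLength_eq (hX : IsRTree X) (hp : IsAxisPoint f p) :
    translationLength f = dist p (f p) := by
  have : Nonempty X := ⟨p⟩
  refine (translationLength_le f p).antisymm (le_ciInf fun x ↦ ?_)
  have hbound : ∀ n : ℕ, n * (dist p (f p) - dist x (f x)) ≤ 2 * dist p x := fun n ↦ by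
    have htri := dist_triangle4 p x ((f ^ n) x) ((f ^ n) p)
    rw [(f ^ n).isometry.dist_eq, dist_comm x p, hp.dist_pow_apply hX n] at htri
    linarith [dist_pow_apply_le f x n]
  by_contra! hlt
  obtain ⟨n, hn⟩ := Archimedean.arch (2 * dist p x + 1) (sub_pos.2 hlt)
  rw [nsmul_eq_mul] at hn
  linarith [hbound n]

lemma notMem_metricInterval_pow_apply (hX : IsRTree X) (hp : IsAxisPoint f p) {n : ℕ}
    (hx : dist p x < n * dist p (f p)) : p ∉ metricInterval ((f ^ n) x) (f p) := by
  obtain ⟨m, rfl⟩ : ∃ m, n = m + 1 := Nat.exists_eq_succ_of_ne_zero <| by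
    rintro rfl
    simp [dist_nonneg.not_gt] at hx
  have hnear : p ∉ metricInterval ((f ^ (m + 1)) x) ((f ^ (m + 1)) p) := by
    refine notMem_metricInterval_of_dist_lt ?_
    rwa [(f ^ (m + 1)).isometry.dist_eq, hp.dist_pow_apply hX, dist_comm x p]
  refine hX.notMem_trans hnear fun hback ↦ ?_
  have hstep : dist ((f ^ (m + 1)) p) (f p) = m * dist p (f p) := by
    rw [pow_succ', IsometryEquiv.mul_apply, f.isometry.dist_eq, dist_comm, hp.dist_pow_apply hX]
  rw [mem_metricInterval, hstep, dist_comm _ p, hp.dist_pow_apply hX] at hback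
  push_cast at hback
  linarith [dist_pos.2 hp.apply_ne.symm]

end IsAxisPoint

-- The ping-pong step: if `f` and `f⁻¹` both move `p` into the component of `v`, then `f` moves
-- every other component there as well.
lemma IsRTree.notMem_metricInterval_apply_of_mem (hX : IsRTree X)
    (hfwd : p ∉ metricInterval (f p) v) (hbwd : p ∉ metricInterval (f⁻¹ p) v)
    (hy : p ∈ metricInterval y v) : p ∉ metricInterval (f y) v := by
  have hne : f p ≠ p := fun h ↦ hfwd (h.symm ▸ left_mem_metricInterval p v)
  have hy' : p ∈ metricInterval (f⁻¹ p) y := by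
    rw [metricInterval_comm] at hbwd hy ⊢
    by_contra h
    exact hX.notMem_trans hbwd (metricInterval_comm y _ ▸ h) hy
  rw [mem_metricInterval_inv_apply_iff] at hy'
  refine hX.notMem_trans (fun h ↦ hne ?_) hfwd
  exact eq_of_mem_metricInterval_of_mem_metricInterval
    (metricInterval_comm p (f y) ▸ hy') h

/-- `p` is the projection of `q` to the axis of the hyperbolic isometry `f`: it lies on the axis,
and the arc from `p` to `q` leaves the axis immediately (or `p = q`). -/
structure IsAxisProj (f : X ≃ᵢ X) (q p : X) : Prop extends IsAxisPoint f p where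
  mem_inv_apply : p ∈ metricInterval (f⁻¹ p) q
  mem_apply : p ∈ metricInterval (f p) q

namespace IsAxisProj

lemma mem_metricInterval_apply (hX : IsRTree X) (hp : IsAxisProj f q p) :
    p ∈ metricInterval q (f q) ∧ f p ∈ metricInterval p (f q) := by
  have hfp : f p ∈ metricInterval p (f q) :=
    (mem_metricInterval_inv_apply_iff f).1 hp.mem_inv_apply
  have hp' : p ∈ metricInterval q (f p) := metricInterval_comm q _ ▸ hp.mem_apply
  exact ⟨(hX.mem_metricInterval_of_overlap hp.apply_ne.symm hp' hfp).1, hfp⟩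

lemma dist_apply (hX : IsRTree X) (hp : IsAxisProj f q p) :
    dist q (f q) = translationLength f + 2 * dist p q := by
  obtain ⟨h₁, h₂⟩ := hp.mem_metricInterval_apply hX
  rw [mem_metricInterval] at h₁ h₂
  rw [f.isometry.dist_eq] at h₂
  rw [hp.translationLength_eq hX]
  linarith [dist_comm p q]

lemma mul_apply_mem (hX : IsRTree X) (hp : IsAxisProj f q p) (hq : IsAxisProj g p q)
    (hpq : p ≠ q) : f p ∈ metricInterval p ((f * g) p) :=
  (mem_metricInterval_inv_apply_iff f).1 (hX.mem_metricInterval_of_overlap hpq hp.mem_inv_apply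
    (hq.mem_metricInterval_apply hX).1).1

lemma isAxisPoint_mul (hX : IsRTree X) (hp : IsAxisProj f q p) (hq : IsAxisProj g p q)
    (hpq : p ≠ q) : IsAxisPoint (f * g) p := by
  obtain ⟨hqp, hgq⟩ := hq.mem_metricInterval_apply hX
  have hfp : f p ∈ metricInterval p ((f * g) p) := hp.mul_apply_mem hX hq hpq
  have hgp : g p ∈ metricInterval p (g (f p)) :=
    (hX.mem_metricInterval_of_overlap (g.injective.ne hpq.symm)
      (metricInterval_subset_right hqp hgq)
      ((apply_mem_metricInterval_iff g.isometry).2 (metricInterval_comm q _ ▸ hp.mem_apply))).2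
  have hpgp : p ≠ g p := fun h ↦ by
    rw [← h, mem_metricInterval, dist_self, dist_comm q] at hqp
    linarith [dist_pos.2 hpq]
  have hfgp : (f * g) p ∈ metricInterval p ((f * g) (f p)) :=
    (hX.mem_metricInterval_of_overlap (f.injective.ne hpgp) hfp
      ((apply_mem_metricInterval_iff f.isometry).2 hgp)).2
  refine .of_apply_mem (fun h ↦ ?_) (hX.mem_metricInterval_of_overlap
    ((f * g).injective.ne hp.apply_ne.symm) hfgp
    ((apply_mem_metricInterval_iff (f * g).isometry).2 hfp)).1
  rw [h] at hfp
  exact hp.apply_ne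
    (eq_of_mem_metricInterval_of_mem_metricInterval hfp (left_mem_metricInterval p _))

lemma translationLength_mul (hX : IsRTree X) (hp : IsAxisProj f q p) (hq : IsAxisProj g p q)
    (hpq : p ≠ q) :
    translationLength (f * g) = translationLength f + translationLength g + 2 * dist p q := by
  rw [(hp.isAxisPoint_mul hX hq hpq).translationLength_eq hX,
    ← mem_metricInterval.1 (hp.mul_apply_mem hX hq hpq), IsometryEquiv.mul_apply,
    f.isometry.dist_eq, hq.dist_apply hX, hp.translationLength_eq hX, dist_comm q p]
  ring

end IsAxisProj

end Isometries

section BranchPoints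

variable {X : Type*} [MetricSpace X] {a b p q x : X} {V : Set X}

/-- A branch point of an `ℝ`-tree: three points `u`, `v`, `w` lie in three different components of
its complement. -/
def IsBranchPoint (p : X) : Prop :=
  ∃ u v w : X, u ≠ p ∧ v ≠ p ∧ w ≠ p ∧
    p ∈ metricInterval u v ∧ p ∈ metricInterval v w ∧ p ∈ metricInterval u w

lemma IsBranchPoint.apply (hp : IsBranchPoint p) (f : X ≃ᵢ X) : IsBranchPoint (f p) := by
  obtain ⟨u, v, w, hu, hv, hw, huv, hvw, huw⟩ := hp
  have hf {x y : X} := (apply_mem_metricInterval_iff (x := p) (a := x) (b := y) f.isometry).2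
  exact ⟨f u, f v, f w, f.injective.ne hu, f.injective.ne hv, f.injective.ne hw,
    hf huv, hf hvw, hf huw⟩

lemma IsBranchPoint.exists_pair_avoiding (hX : IsRTree X) (hp : IsBranchPoint p) (q : X) :
    ∃ u v : X, u ≠ p ∧ v ≠ p ∧ p ∈ metricInterval u v ∧
      p ∈ metricInterval u q ∧ p ∈ metricInterval v q := by
  obtain ⟨u, v, w, hu, hv, hw, huv, hvw, huw⟩ := hp
  by_cases huq : p ∈ metricInterval u q
  · by_cases hvq : p ∈ metricInterval v q
    · exact ⟨u, v, hu, hv, huv, huq, hvq⟩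
    · exact ⟨u, w, hu, hw, huw, huq,
        metricInterval_comm q w ▸ hX.mem_of_mem_of_notMem hvw hvq⟩
  · exact ⟨v, w, hv, hw, hvw, metricInterval_comm q v ▸ hX.mem_of_mem_of_notMem huv huq,
      metricInterval_comm q w ▸ hX.mem_of_mem_of_notMem huw huq⟩

lemma IsRTree.exists_isBranchPoint_of_isometry_real (hX : IsRTree X) {e : ℝ → X} (he : Isometry e)
    (hx : x ∉ range e) : ∃ p : X, IsBranchPoint p := by
  set t := dist x (e 0) + 1
  have ht : 0 < t := by positivity
  obtain ⟨m, hxl, hlr, hxr⟩ := hX.exists_median x (e (-t)) (e t)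
  have hdist_lr : dist (e (-t)) (e t) = 2 * t := by
    rw [he.dist_eq, Real.dist_eq, abs_of_neg (by linarith)]
    ring
  have hdist_l : dist (e 0) (e (-t)) = t := by simp [he.dist_eq, abs_of_pos ht]
  have hdist_r : dist (e 0) (e t) = t := by simp [he.dist_eq, abs_of_pos ht]
  have hgeod : IsGeodesicSegment (fun s ↦ e (s - t)) (e (-t)) (e t) := by
    refine ⟨by simp, by simp only [hdist_lr]; ring_nf, fun s _ r _ ↦ ?_⟩
    rw [he.dist_eq, Real.dist_eq, sub_sub_sub_cancel_right]
  refine ⟨m, x, e (-t), e t, ?_, ?_, ?_, hxl, hlr, hxr⟩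
  · rintro rfl
    obtain ⟨s, -, hs⟩ := hX.segImage_eq_metricInterval hgeod ▸ hlr
    exact hx ⟨s - t, hs⟩
  · rintro rfl
    refine notMem_metricInterval_of_dist_lt ?_ hxr
    linarith [dist_triangle x (e 0) (e t)]
  · rintro rfl
    refine notMem_metricInterval_of_dist_lt ?_ hxl
    rw [dist_comm (e t), hdist_lr]
    linarith [dist_triangle x (e 0) (e (-t))]

lemma connectedComponentIn_eq_inter {α : Type*} [TopologicalSpace α] {F C : Set α} {x : α}
    (hC : IsClosed C) (hopen : IsOpen (F ∩ C)) (hconn : IsPreconnected (F ∩ C))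
    (hx : x ∈ F ∩ C) : connectedComponentIn F x = F ∩ C := by
  refine Subset.antisymm ?_ (hconn.subset_connectedComponentIn hx inter_subset_left)
  refine isPreconnected_connectedComponentIn.subset_left_of_subset_union hopen hC.isOpen_compl
    (disjoint_compl_right.mono_left inter_subset_right) (fun y hy ↦ ?_)
    ⟨x, mem_connectedComponentIn hx.1, hx⟩
  exact (em (y ∈ C)).imp_left fun hyC ↦ ⟨connectedComponentIn_subset F x hy, hyC⟩

namespace IsRTree

lemma isOpen_metricInterval_sdiff (hX : IsRTree X)
    (hbranch : ∀ m ∈ metricInterval a b, IsBranchPoint m → m = a ∨ m = b) :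
    IsOpen (metricInterval a b \ {a, b}) := by
  refine Metric.isOpen_iff.2 fun y ⟨hy, hyab⟩ ↦ ?_
  obtain ⟨hya, hyb⟩ : y ≠ a ∧ y ≠ b := by simpa [not_or] using hyab
  refine ⟨min (dist y a) (dist y b), lt_min (dist_pos.2 hya) (dist_pos.2 hyb), fun z hz ↦ ?_⟩
  rw [mem_ball, lt_min_iff, dist_comm y, dist_comm y] at hz
  have ha : a ∉ metricInterval z b := by
    refine hX.notMem_trans (notMem_metricInterval_of_dist_lt hz.1) fun h ↦ hya ?_
    exact eq_of_mem_metricInterval_of_mem_metricInterval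
      (metricInterval_comm a b ▸ hy) (metricInterval_comm y b ▸ h)
  have hb : b ∉ metricInterval z a := by
    refine hX.notMem_trans (notMem_metricInterval_of_dist_lt hz.2) fun h ↦ hyb ?_
    exact eq_of_mem_metricInterval_of_mem_metricInterval hy (metricInterval_comm y a ▸ h)
  obtain ⟨m, hza, hab, hzb⟩ := hX.exists_median z a b
  have hma : m ≠ a := fun h ↦ ha (h ▸ hzb)
  have hmb : m ≠ b := fun h ↦ hb (h ▸ hza)
  obtain rfl : z = m := by
    by_contra hzm
    exact (hbranch m hab ⟨z, a, b, hzm, hma.symm, hmb.symm, hza, hab, hzb⟩).elim hma hmb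
  exact ⟨hab, by simp [hma, hmb]⟩

lemma exists_mem_closest (hX : IsRTree X) (hV : IsClosed V) (hp : p ∈ V) (x : X) :
    ∃ a ∈ V, a ∈ metricInterval p x ∧ metricInterval a x ∩ V ⊆ {a} := by
  obtain ⟨a, ⟨hpx, haV⟩, hmin⟩ := ((hX.isCompact_metricInterval p x).inter_right hV).exists_isMinOn
    ⟨p, left_mem_metricInterval p x, hp⟩ (f := fun y ↦ dist y x) (by fun_prop)
  refine ⟨a, haV, hpx, fun y ⟨hy, hyV⟩ ↦ ?_⟩
  have hle : dist a x ≤ dist y x := hmin ⟨metricInterval_subset_right hpx hy, hyV⟩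
  rw [mem_metricInterval] at hy
  exact (dist_le_zero.1 (by linarith)).symm

lemma exists_gap (hX : IsRTree X) (hV : IsClosed V) (hp : p ∈ V) (hq : q ∈ V)
    (hx : x ∈ metricInterval p q) :
    ∃ a ∈ V, ∃ b ∈ V, x ∈ metricInterval a b ∧ metricInterval a b ∩ V ⊆ {a, b} := by
  obtain ⟨a, haV, hpa, hax⟩ := hX.exists_mem_closest hV hp x
  obtain ⟨b, hbV, hqb, hbx⟩ := hX.exists_mem_closest hV hq x
  have haq := mem_metricInterval_of_mem_left hx hpa
  have hab := mem_metricInterval_of_mem_left (metricInterval_comm a q ▸ haq) hqb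
  rw [metricInterval_comm] at hab
  refine ⟨a, haV, b, hbV, hab, fun y ⟨hy, hyV⟩ ↦ ?_⟩
  rcases hX.mem_or_mem_of_mem_metricInterval hy hab with hyx | hyx
  · exact .inl (hax ⟨hyx, hyV⟩)
  · exact .inr (hbx ⟨metricInterval_comm x b ▸ hyx, hyV⟩)

lemma exists_edge (hX : IsRTree X) (hV : IsClosed V) (hbranch : ∀ m, IsBranchPoint m → m ∈ V)
    (hp : p ∈ V) (hq : q ∈ V) (hx : x ∈ metricInterval p q) (hxV : x ∉ V) :
    ∃ L > (0 : ℝ), ∃ f : ℝ → X,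
      (∀ s ∈ Icc (0 : ℝ) L, ∀ t ∈ Icc (0 : ℝ) L, dist (f s) (f t) = |s - t|) ∧
      f '' Ioo 0 L = connectedComponentIn Vᶜ x ∧ f 0 ∈ V ∧ f L ∈ V := by
  obtain ⟨a, haV, b, hbV, hxab, hgap⟩ := hX.exists_gap hV hp hq hx
  obtain ⟨γ, h⟩ := hX.1 a b
  have hinterior : Vᶜ ∩ metricInterval a b = metricInterval a b \ {a, b} := by
    ext y
    refine ⟨fun ⟨hyV, hy⟩ ↦ ⟨hy, ?_⟩, fun ⟨hy, hyab⟩ ↦ ⟨fun hyV ↦ hyab (hgap ⟨hy, hyV⟩), hy⟩⟩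
    rintro (rfl | rfl) <;> contradiction
  have himage : γ '' Ioo 0 (dist a b) = Vᶜ ∩ metricInterval a b := by
    rw [hinterior, h.image_Ioo, hX.segImage_eq_metricInterval h]
  have hne : a ≠ b := by
    rintro rfl
    exact hxV (eq_of_mem_metricInterval_of_mem_metricInterval hxab
      (left_mem_metricInterval a x) ▸ haV)
  refine ⟨dist a b, dist_pos.2 hne, γ, h.2.2, ?_, by rwa [h.1], by rwa [h.2.1]⟩
  rw [himage, connectedComponentIn_eq_inter (hX.isCompact_metricInterval a b).isClosed
    _ _ ⟨hxV, hxab⟩]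
  · exact hinterior ▸ hX.isOpen_metricInterval_sdiff fun m hm hm' ↦ hgap ⟨hm, hbranch m hm'⟩
  · exact himage ▸ isPreconnected_Ioo.image γ (h.continuousOn.mono Ioo_subset_Icc_self)

end IsRTree

end BranchPoints

section Actions

variable {G : Type*} [Group G] {X : Type*} [MetricSpace X] {σ : G →* (X ≃ᵢ X)} {p q u v : X}

/-- An isometric action on an `ℝ`-tree is minimal if it preserves no proper subtree. The subtrees
are the connected subsets. -/
def IsMinimalAction (σ : G →* (X ≃ᵢ X)) : Prop :=
  ∀ S : Set X, IsConnected S → (∀ g : G, σ g '' S = S) → S = univ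

/-- An isometric action on an `ℝ`-tree is irreducible if it contains two hyperbolic isometries
with disjoint axes. -/
def IsIrreducibleAction (σ : G →* (X ≃ᵢ X)) : Prop :=
  ∃ a b : G, IsHyperbolicIsom (σ a) ∧ IsHyperbolicIsom (σ b) ∧
    Disjoint (isomCore (σ a)) (isomCore (σ b))

lemma image_eq_of_image_subset {S : Set X} (h : ∀ g : G, σ g '' S ⊆ S) (g : G) :
    σ g '' S = S := by
  refine (h g).antisymm fun x hx ↦ ⟨(σ g)⁻¹ x, ?_, (σ g).apply_inv_self x⟩
  rw [← map_inv]
  exact h g⁻¹ (mem_image_of_mem _ hx)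

lemma IsRTree.isPreconnected_iUnion_metricInterval {ι : Type*} (hX : IsRTree X) (f : ι → X) :
    IsPreconnected (⋃ (i) (j), metricInterval (f i) (f j)) := by
  refine isPreconnected_of_forall_pair fun x hx y hy ↦ ?_
  obtain ⟨i, j, hx⟩ := mem_iUnion₂.1 hx
  obtain ⟨k, l, hy⟩ := mem_iUnion₂.1 hy
  refine ⟨metricInterval (f i) (f j) ∪ metricInterval (f j) (f k) ∪ metricInterval (f k) (f l),
    ?_, .inl (.inl hx), .inr hy, ?_⟩
  · exact union_subset (union_subset (subset_iUnion₂_of_subset i j Subset.rfl)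
      (subset_iUnion₂_of_subset j k Subset.rfl)) (subset_iUnion₂_of_subset k l Subset.rfl)
  · exact ((hX.isPreconnected_metricInterval _ _).union (f j) (by simp) (by simp)
      (hX.isPreconnected_metricInterval _ _)).union (f k) (by simp) (by simp)
      (hX.isPreconnected_metricInterval _ _)

namespace IsMinimalAction

lemma exists_mem_metricInterval (hσ : IsMinimalAction σ) (hX : IsRTree X) (y x : X) :
    ∃ g h : G, x ∈ metricInterval (σ g y) (σ h y) := by
  have huniv : ⋃ (g : G) (h : G), metricInterval (σ g y) (σ h y) = univ := by
    refine hσ _ ⟨⟨σ 1 y, mem_iUnion₂.2 ⟨1, 1, left_mem_metricInterval _ _⟩⟩,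
      hX.isPreconnected_iUnion_metricInterval fun g ↦ σ g y⟩ (image_eq_of_image_subset ?_)
    rintro k _ ⟨z, hz, rfl⟩
    obtain ⟨g, h, hz⟩ := mem_iUnion₂.1 hz
    refine mem_iUnion₂.2 ⟨k * g, k * h, ?_⟩
    rwa [map_mul, map_mul, IsometryEquiv.mul_apply, IsometryEquiv.mul_apply,
      apply_mem_metricInterval_iff (σ k).isometry]
  exact mem_iUnion₂.1 (huniv ▸ mem_univ x)

lemma exists_notMem_metricInterval (hσ : IsMinimalAction σ) (hX : IsRTree X) (y : X)
    (hu : u ≠ p) : ∃ g : G, p ∉ metricInterval (σ g y) u := by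
  obtain ⟨g, h, hgh⟩ := hσ.exists_mem_metricInterval hX y u
  by_contra! hp
  exact hu (metricInterval_inter_subset hgh ⟨hp g, metricInterval_comm _ u ▸ hp h⟩).symm

end IsMinimalAction

namespace IsIrreducibleAction

lemma exists_isBranchPoint (hσ : IsIrreducibleAction σ) (hX : IsRTree X) :
    ∃ p : X, IsBranchPoint p := by
  obtain ⟨a, b, ⟨-, e, he, hea⟩, ⟨-, e', -, heb⟩, hdisj⟩ := hσ
  rw [← hea, ← heb] at hdisj
  exact hX.exists_isBranchPoint_of_isometry_real (.of_dist_eq fun s t ↦ he s t)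
    (hdisj.notMem_of_mem_right (mem_range_self 0))

lemma exists_notMem_isomCore (hσ : IsIrreducibleAction σ) (p : X) :
    ∃ R : ℝ, ∀ q : X, ∃ c : G, q ∉ isomCore (σ c) ∧ ∃ x ∈ isomCore (σ c), dist p x ≤ R := by
  obtain ⟨a, b, ⟨-, e, -, hea⟩, ⟨-, e', -, heb⟩, hdisj⟩ := hσ
  refine ⟨max (dist p (e 0)) (dist p (e' 0)), fun q ↦ ?_⟩
  by_cases hq : q ∈ isomCore (σ a)
  · exact ⟨b, hdisj.notMem_of_mem_left hq, e' 0, heb ▸ mem_range_self 0, le_max_right _ _⟩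
  · exact ⟨a, hq, e 0, hea ▸ mem_range_self 0, le_max_left _ _⟩

-- If `g` moves `p` towards `u`, then `g` itself works unless `p` lies on its axis. In that case a
-- high power of `g` carries a core missing the preimage of `p` into the component of `u`, and the
-- conjugate element, whose core is the image, moves `p` towards `u` in both directions.
lemma exists_apply_inv_apply_notMem (hσ : IsIrreducibleAction σ) (hmin : IsMinimalAction σ)
    (hX : IsRTree X) (hu : u ≠ p) :
    ∃ k : G, p ∉ metricInterval (σ k p) u ∧ p ∉ metricInterval ((σ k)⁻¹ p) u := by
  obtain ⟨g, hgu⟩ := hmin.exists_notMem_metricInterval hX p hu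
  by_cases hback : p ∈ metricInterval ((σ g)⁻¹ p) (σ g p)
  swap
  · exact ⟨g, hgu, hX.notMem_trans hback hgu⟩
  have hp : IsAxisPoint (σ g) p := ⟨fun h ↦ hgu (h.symm ▸ left_mem_metricInterval p u), hback⟩
  obtain ⟨R, hR⟩ := hσ.exists_notMem_isomCore p
  obtain ⟨n, hn⟩ := exists_nat_gt (R / dist p (σ g p))
  rw [div_lt_iff₀ (dist_pos.2 hp.apply_ne.symm)] at hn
  obtain ⟨c, hpc, x, hxc, hxR⟩ := hR ((σ g ^ n)⁻¹ p)
  have hxu : p ∉ metricInterval ((σ g ^ n) x) u :=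
    hX.notMem_trans (hp.notMem_metricInterval_pow_apply hX (hxR.trans_lt hn)) hgu
  have hk : σ (g ^ n * c * (g ^ n)⁻¹) = σ g ^ n * σ c * (σ g ^ n)⁻¹ := by
    simp only [map_mul, map_pow, map_inv]
  refine ⟨g ^ n * c * (g ^ n)⁻¹, ?_, ?_⟩ <;> rw [hk]
  all_goals
    refine hX.notMem_trans (notMem_metricInterval_apply_of_mem_isomCore ?_ ?_) hxu <;>
    simpa only [isomCore_inv, mem_isomCore_conj_iff, IsometryEquiv.inv_apply_self]

lemma exists_inv_apply_notMem_apply_notMem (hσ : IsIrreducibleAction σ) (hmin : IsMinimalAction σ)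
    (hX : IsRTree X) (hu : u ≠ p) (hv : v ≠ p) (huv : p ∈ metricInterval u v) :
    ∃ g : G, p ∉ metricInterval ((σ g)⁻¹ p) u ∧ p ∉ metricInterval (σ g p) v := by
  obtain ⟨k, hku, hku'⟩ := hσ.exists_apply_inv_apply_notMem hmin hX hu
  obtain ⟨l, hlv, hlv'⟩ := hσ.exists_apply_inv_apply_notMem hmin hX hv
  have hvu : p ∈ metricInterval v u := metricInterval_comm u v ▸ huv
  refine ⟨l * k⁻¹, ?_, ?_⟩
  · rw [map_mul, map_inv, mul_inv_rev, inv_inv, IsometryEquiv.mul_apply]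
    refine hX.notMem_metricInterval_apply_of_mem hku hku' (hX.mem_of_mem_of_notMem hvu ?_)
    rwa [metricInterval_comm]
  · rw [map_mul, map_inv, IsometryEquiv.mul_apply]
    refine hX.notMem_metricInterval_apply_of_mem hlv hlv' (hX.mem_of_mem_of_notMem huv ?_)
    rwa [metricInterval_comm]

lemma exists_isAxisProj (hσ : IsIrreducibleAction σ) (hmin : IsMinimalAction σ)
    (hX : IsRTree X) (hp : IsBranchPoint p) (q : X) : ∃ g : G, IsAxisProj (σ g) q p := by
  obtain ⟨u, v, hu, hv, huv, huq, hvq⟩ := hp.exists_pair_avoiding hX q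
  obtain ⟨g, hgu, hgv⟩ := hσ.exists_inv_apply_notMem_apply_notMem hmin hX hu hv huv
  rw [metricInterval_comm] at hgu hgv
  have hv_inv : p ∈ metricInterval v ((σ g)⁻¹ p) :=
    metricInterval_comm v _ ▸ hX.mem_of_mem_of_notMem huv hgu
  refine ⟨g, ⟨fun h ↦ hgv (h.symm ▸ right_mem_metricInterval v p), ?_⟩,
    hX.mem_of_mem_of_notMem huq hgu, hX.mem_of_mem_of_notMem hvq hgv⟩
  exact metricInterval_comm _ (σ g p) ▸ hX.mem_of_mem_of_notMem hv_inv hgv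

lemma two_mul_dist_mem (hσ : IsIrreducibleAction σ) (hmin : IsMinimalAction σ) (hX : IsRTree X)
    {Λ : AddSubgroup ℝ} (hΛ : ∀ g, translationLength (σ g) ∈ Λ)
    (hp : IsBranchPoint p) (hq : IsBranchPoint q) : 2 * dist p q ∈ Λ := by
  rcases eq_or_ne p q with rfl | hpq
  · simp [Λ.zero_mem]
  obtain ⟨f, hf⟩ := hσ.exists_isAxisProj hmin hX hp q
  obtain ⟨g, hg⟩ := hσ.exists_isAxisProj hmin hX hq p
  have hfg := hf.translationLength_mul hX hg hpq
  rw [← map_mul] at hfg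
  rw [← sub_eq_iff_eq_add'.2 hfg]
  exact Λ.sub_mem (hΛ _) (Λ.add_mem (hΛ f) (hΛ g))

lemma exists_le_dist_of_isBranchPoint (hσ : IsIrreducibleAction σ) (hmin : IsMinimalAction σ)
    (hX : IsRTree X) {Λ : AddSubgroup ℝ} [DiscreteTopology Λ]
    (hΛ : ∀ g, translationLength (σ g) ∈ Λ) :
    ∃ ε > 0, ∀ p q : X, IsBranchPoint p → IsBranchPoint q → p ≠ q → ε ≤ dist p q := by
  obtain ⟨δ, hδ, hball⟩ := exists_ball_inter_eq_singleton_of_mem_discrete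
    (s := (Λ : Set ℝ)) ⟨inferInstance⟩ Λ.zero_mem
  refine ⟨δ / 2, half_pos hδ, fun p q hp hq hpq ↦ ?_⟩
  by_contra! hlt
  have hmem : 2 * dist p q ∈ ball 0 δ ∩ (Λ : Set ℝ) := by
    refine ⟨?_, hσ.two_mul_dist_mem hmin hX hΛ hp hq⟩
    rw [mem_ball_zero_iff, Real.norm_of_nonneg (by positivity)]
    linarith
  rw [hball, mem_singleton_iff] at hmem
  linarith [dist_pos.2 hpq]

end IsIrreducibleAction

end Actions

theorem simplicial_of_integer_lengths_general {G : Type*} [Group G] {X : Type*} [MetricSpace X]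
    (hX : IsRTree X) (σ : G →* (X ≃ᵢ X)) (hmin : IsMinimalAction σ) (hirr : IsIrreducibleAction σ)
    (Λ : AddSubgroup ℝ) [DiscreteTopology Λ] (hΛ : ∀ g : G, translationLength (σ g) ∈ Λ) :
    IsMetricSimplicialTree X := by
  obtain ⟨ε, hε, hsep⟩ := hirr.exists_le_dist_of_isBranchPoint hmin hX hΛ
  have hclosed : IsClosed {p : X | IsBranchPoint p} :=
    isClosed_of_pairwise_le_dist hε fun p hp q hq hpq ↦ hsep p q hp hq hpq
  refine ⟨hX, {p | IsBranchPoint p}, hclosed, fun p hp ↦ ⟨ε, hε, fun q hq hpq ↦ ?_⟩,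
    fun x hx ↦ ?_⟩
  · by_contra hne
    exact hpq.not_ge (hsep p q hp hq (Ne.symm hne))
  · obtain ⟨b, hb⟩ := hirr.exists_isBranchPoint hX
    obtain ⟨g, h, hgh⟩ := hmin.exists_mem_metricInterval hX b x
    exact hX.exists_edge hclosed (fun _ hm ↦ hm) (hb.apply (σ g)) (hb.apply (σ h)) hgh hx

/-- A minimal irreducible isometric action of a finitely generated group
on an `ℝ`-tree with integer translation lengths forces the tree to be simplicial. -/
theorem simplicial_of_integer_lengths {G : Type*} [Group G] (hG : Group.FG G)
    {X : Type*} [MetricSpace X] [Nonempty X] (hX : IsRTree X)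
    (σ : G →* (X ≃ᵢ X))
    (hmin : ∀ S : Set X, IsConnected S → (∀ g : G, σ g '' S = S) → S = Set.univ)
    (hirr : ∃ a b : G, IsHyperbolicIsom (σ a) ∧ IsHyperbolicIsom (σ b) ∧
      Disjoint (isomCore (σ a)) (isomCore (σ b)))
    (hint : ∀ g : G, ∃ k : ℤ, translationLength (σ g) = (k : ℝ)) :
    IsMetricSimplicialTree X :=
  simplicial_of_integer_lengths_general hX σ hmin hirr (AddSubgroup.zmultiples 1) fun g ↦
    (hint g).imp fun k hk ↦ by simp [hk]
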